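/- Let R be either a Prüfer v-multiplication domain or a Mori domain. Then R is a t#-domain if and only if there is a unique set {P_α} of pairwise incomparable t-primes of R such that R = ⋂_α R_{P_α}. In particular, a Mori domain has this unique-representation property. -/

import Mathlib

/-!
Every proper `t`-ideal lies in a maximal `t`-ideal, maximal `t`-ideals are prime and
`R = ⋂ R_M` over `t-Max(R)`, for any domain `R`; so `t-Max(R)` is always one representing set of
incomparable `t`-primes. If `R` is not `t#`, some maximal `t`-ideal can be omitted from this
representation, so uniqueness fails (`isTSharp_of_unique`).

Conversely, uniqueness amounts to `t-Max(R) ⊆ Λ` for each representing set `Λ`. The tool is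
`exists_le_of_rep`: a nonzero finitely generated ideal `J` inside a maximal `t`-ideal `M` has
`J⁻¹ ≠ R`, so `J` must be contained in some `P ∈ Λ`; otherwise `J⁻¹ ⊆ ⋂ R_P = R`.

* Mori case: `M = J_v` for a finitely generated `J ⊆ M`. Then `J ⊆ P` gives `M ⊆ P`, so
  `M = P ∈ Λ`. The `t#` property is not needed here, whence the last claim of the theorem.
* PVMD case: suppose `M ∉ Λ`. By `t#` there is `u ∉ R_M` lying in `R_N` for all other maximal
  `t`-ideals `N`. Since `(R :_R u)` is `t`-invertible, it has a finitely generated subideal `J`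
  contained in no maximal `t`-ideal except `M` (`IsPVMD.exists_fg_le_colonIdeal`). The primes
  inside `M` form a chain, so at most one `P ∈ Λ` is contained in `M`, and one can choose `r ∈ M`
  outside it. Then `J + rR ⊆ M` is contained in no `P ∈ Λ`, a contradiction.
-/

/-
Definitions following S. Gabelli, E. Houston, T. G. Lucas,
"The t#-property for integral domains".

All the star-operation notions (`v`, `t`, maximal `t`-ideals, etc.) are defined for a
commutative ring `R` via its total quotient field `FractionRing R`; in all theorems `R`
is assumed to be an integral domain, so `FractionRing R` is its quotient field `K`.
-/

noncomputable section

namespace TSharpPaper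

variable (R : Type*) [CommRing R]

/-- The image of an integral ideal in the quotient field, as an `R`-submodule. -/
def idealSub (I : Ideal R) : Submodule R (FractionRing R) :=
  Submodule.map (Algebra.linearMap R (FractionRing R)) I

/-- The divisorial closure `I_v = (I⁻¹)⁻¹` of an integral ideal, as an integral ideal.
Here for a submodule `J` of `K`, `1 / J = {x ∈ K : xJ ⊆ R}` is `J⁻¹`. -/
def vIdeal (I : Ideal R) : Ideal R :=
  Submodule.comap (Algebra.linearMap R (FractionRing R))
    ((1 : Submodule R (FractionRing R)) / (1 / idealSub R I))

/-- The `t`-closure `I_t = ⋃ J_v`, the union over all nonzero finitely generated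
subideals `J` of `I`. -/
def tIdeal (I : Ideal R) : Ideal R :=
  ⨆ (J : Ideal R) (_ : J.FG) (_ : J ≠ ⊥) (_ : J ≤ I), vIdeal R J

/-- A (nonzero) integral ideal is divisorial if `I = I_v`. -/
def IsDivisorialIdeal (I : Ideal R) : Prop := I ≠ ⊥ ∧ vIdeal R I = I

/-- A (nonzero) integral ideal is a `t`-ideal if `I = I_t`. -/
def IsTIdeal (I : Ideal R) : Prop := I ≠ ⊥ ∧ tIdeal R I = I

/-- A `t`-prime is a prime `t`-ideal. -/
def IsTPrime (P : Ideal R) : Prop := P.IsPrime ∧ IsTIdeal R P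

/-- The set `t-Max(R)` of maximal `t`-ideals: integral ideals maximal among proper
integral `t`-ideals. -/
def tMax : Set (Ideal R) :=
  {M | IsTIdeal R M ∧ M ≠ ⊤ ∧ ∀ J : Ideal R, IsTIdeal R J → J ≠ ⊤ → M ≤ J → J = M}

/-- The localization `R_P` of `R` at (the complement of) a prime `P`, viewed as a subset
of the quotient field. -/
def locSet (P : Ideal R) : Set (FractionRing R) :=
  {x | ∃ r s : R, s ∉ P ∧ x * algebraMap R (FractionRing R) s = algebraMap R (FractionRing R) r}

/-- The image of `R` in its quotient field. -/
def imageR : Set (FractionRing R) := Set.range (algebraMap R (FractionRing R))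

/-- `R` is a `t#`-domain if `⋂_{M ∈ 𝔐₁} R_M ≠ ⋂_{M ∈ 𝔐₂} R_M` for any two distinct
subsets `𝔐₁, 𝔐₂` of `t-Max(R)`. -/
def IsTSharp : Prop :=
  ∀ 𝔐₁ 𝔐₂ : Set (Ideal R), 𝔐₁ ⊆ tMax R → 𝔐₂ ⊆ tMax R → 𝔐₁ ≠ 𝔐₂ →
    (⋂ M ∈ 𝔐₁, locSet R M) ≠ ⋂ M ∈ 𝔐₂, locSet R M

/-- The conductor `(R :_R u) = {r ∈ R : r·u ∈ R}` of an element `u` of the quotient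
field. -/
def colonIdeal (u : FractionRing R) : Ideal R :=
  Submodule.comap (Algebra.linearMap R (FractionRing R))
    (Submodule.comap (LinearMap.mulLeft R u) (1 : Submodule R (FractionRing R)))

/-- `R` is `v`-coherent if for each nonzero finitely generated ideal `I` of `R`,
`I⁻¹ = J_v` for some finitely generated fractional ideal `J`. -/
def IsVCoherent : Prop :=
  ∀ I : Ideal R, I ≠ ⊥ → I.FG →
    ∃ J : Submodule R (FractionRing R), J.FG ∧
      (1 : Submodule R (FractionRing R)) / idealSub R I = 1 / (1 / J)

/-- An ideal is `v`-finite if it equals `J_v` for some finitely generated ideal `J`. -/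
def IsVFinite (I : Ideal R) : Prop := ∃ J : Ideal R, J.FG ∧ I = vIdeal R J

/-- `Φ(Λ)`: the set of all integral `t`-ideals `I` of `R` with `I ⊄ P` for every
`P ∈ Λ`. -/
def Phi (Λ : Set (Ideal R)) : Set (Ideal R) :=
  {I | IsTIdeal R I ∧ ∀ P ∈ Λ, ¬ I ≤ P}

/-- `Φ(Λ)` is `v`-finite if every `t`-ideal in `Φ(Λ)` contains a `v`-finite `t`-ideal
belonging to `Φ(Λ)`. -/
def PhiVFinite (Λ : Set (Ideal R)) : Prop :=
  ∀ I ∈ Phi R Λ, ∃ J ∈ Phi R Λ, J ≤ I ∧ IsVFinite R J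

/-- The generalized ring of quotients `R_{Φ(Λ)} = {x ∈ K : xI ⊆ R for some I ∈ Φ(Λ)}`. -/
def RPhi (Λ : Set (Ideal R)) : Set (FractionRing R) :=
  {x | ∃ I ∈ Phi R Λ, ∀ a ∈ I, x * algebraMap R (FractionRing R) a ∈ imageR R}

/-- `Λ` is a set of pairwise incomparable `t`-primes of `R`. -/
def IncompTPrimes (Λ : Set (Ideal R)) : Prop :=
  (∀ P ∈ Λ, IsTPrime R P) ∧ ∀ P ∈ Λ, ∀ Q ∈ Λ, P ≤ Q → P = Q

/-- `R` is a Prüfer `v`-multiplication domain if `R_M` is a valuation domain for every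
maximal `t`-ideal `M` of `R`. -/
def IsPVMD [IsDomain R] : Prop :=
  ∀ M ∈ tMax R, ∀ x : FractionRing R, x ≠ 0 → x ∈ locSet R M ∨ x⁻¹ ∈ locSet R M

/-- `R` is a Mori domain: the ascending chain condition holds on integral divisorial
ideals. -/
def IsMori : Prop :=
  ∀ f : ℕ → Ideal R, (∀ n, IsDivisorialIdeal R (f n)) → (∀ n, f n ≤ f (n + 1)) →
    ∃ n, ∀ m, n ≤ m → f m = f n

/-- The localization `T_Q` of a subring `T` of the quotient field of `R` at (the
complement of) an ideal `Q` of `T`, viewed as a subset of the quotient field of `R`. -/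
def locSetSub (T : Subring (FractionRing R)) (Q : Ideal T) : Set (FractionRing R) :=
  {x | ∃ r s : T, s ∉ Q ∧ x * (s : FractionRing R) = (r : FractionRing R)}

/-- `T` is an overring of `R`: a subring of the quotient field containing (the image
of) `R`. -/
def IsOverring (T : Subring (FractionRing R)) : Prop :=
  ∀ r : R, algebraMap R (FractionRing R) r ∈ T

/-- The canonical ring homomorphism from `R` to an overring `T`; `M ∩ R` is the
contraction `Ideal.comap (intoOverring R T h) M`. -/
def intoOverring (T : Subring (FractionRing R)) (h : IsOverring R T) : R →+* T :=
  (algebraMap R (FractionRing R)).codRestrict T h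

/-- `T` is a `t`-flat overring of `R`: `T_M = R_{M ∩ R}` for each maximal `t`-ideal `M`
of `T`. -/
def IsTFlat (T : Subring (FractionRing R)) : Prop :=
  ∃ h : IsOverring R T, ∀ M ∈ tMax (↥T),
    locSetSub R T M = locSet R (Ideal.comap (intoOverring R T h) M)

/-- `T` is `t`-linked over `R`: for each nonzero finitely generated ideal `I` of `R` with
`(R : I) = R` one has `(T : IT) = T`. -/
def IsTLinked (T : Subring (FractionRing R)) : Prop :=
  ∀ I : Ideal R, I ≠ ⊥ → I.FG →
    (1 : Submodule R (FractionRing R)) / idealSub R I = 1 →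
    {x : FractionRing R | ∀ a ∈ I, x * algebraMap R (FractionRing R) a ∈ T} =
      (T : Set (FractionRing R))

/-- `T` is a `t`-subintersection of `R`: `T = ⋂_{P ∈ Λ} R_P` for some set `Λ` of
`t`-primes of `R`. -/
def IsTSubintersection (T : Subring (FractionRing R)) : Prop :=
  ∃ Λ : Set (Ideal R), (∀ P ∈ Λ, IsTPrime R P) ∧
    (T : Set (FractionRing R)) = ⋂ P ∈ Λ, locSet R P

/-- `(P : P) = {x ∈ K : xP ⊆ P}`, as a subring of the quotient field of `R`. -/
def colonPP (P : Ideal R) : Subring (FractionRing R) where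
  carrier := {x | ∀ a ∈ P, x * algebraMap R (FractionRing R) a ∈ idealSub R P}
  one_mem' := by
    intro a ha
    rw [one_mul]
    exact Submodule.mem_map_of_mem ha
  mul_mem' := by
    intro x y hx hy a ha
    rcases hy a ha with ⟨b, hb, hby⟩
    rw [mul_assoc, ← hby]
    exact hx b hb
  add_mem' := by
    intro x y hx hy a ha
    rw [add_mul]
    exact Submodule.add_mem _ (hx a ha) (hy a ha)
  zero_mem' := by
    intro a ha
    rw [zero_mul]
    exact Submodule.zero_mem _
  neg_mem' := by
    intro x hx a ha
    rw [neg_mul]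
    exact Submodule.neg_mem _ (hx a ha)

/-- `R` is a `t#_P`-domain: for sets `Λ₁ ≠ Λ₂` of `t`-primes such that `(P + Q)_t = R`
for distinct `P ∈ Λ₁`, `Q ∈ Λ₂`, one has `R_{Φ(Λ₁)} ≠ R_{Φ(Λ₂)}`. -/
def IsTSharpP : Prop :=
  ∀ Λ₁ Λ₂ : Set (Ideal R), (∀ P ∈ Λ₁, IsTPrime R P) → (∀ Q ∈ Λ₂, IsTPrime R Q) →
    (∀ P ∈ Λ₁, ∀ Q ∈ Λ₂, P ≠ Q → tIdeal R (P ⊔ Q) = ⊤) →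
    Λ₁ ≠ Λ₂ → RPhi R Λ₁ ≠ RPhi R Λ₂

/-- A `t`-localizing system of ideals of `R`: a set of integral `t`-ideals closed under
`t`-multiplication and satisfying the two localizing-system closure properties. -/
def IsTLocalizingSystem (Φ : Set (Ideal R)) : Prop :=
  (∀ I ∈ Φ, IsTIdeal R I) ∧
  (∀ I ∈ Φ, ∀ J ∈ Φ, tIdeal R (I * J) ∈ Φ) ∧
  (∀ I ∈ Φ, ∀ J : Ideal R, IsTIdeal R J → I ≤ J → J ∈ Φ) ∧
  (∀ I ∈ Φ, ∀ J : Ideal R, IsTIdeal R J →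
    (∀ a ∈ I, tIdeal R (Submodule.colon J (Ideal.span {a})) ∈ Φ) → J ∈ Φ)

/-- The ascending chain condition on `t`-primes of `R`. -/
def ACCTPrimes : Prop :=
  ∀ f : ℕ → Ideal R, (∀ n, IsTPrime R (f n)) → (∀ n, f n ≤ f (n + 1)) →
    ∃ n, ∀ m, n ≤ m → f m = f n

/-- The ascending chain condition on radical `t`-ideals of `R`. -/
def ACCRadicalTIdeals : Prop :=
  ∀ f : ℕ → Ideal R, (∀ n, IsTIdeal R (f n) ∧ (f n).radical = f n) →
    (∀ n, f n ≤ f (n + 1)) → ∃ n, ∀ m, n ≤ m → f m = f n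

/-- A prime `P` is branched if there is a `PR_P`-primary ideal of `R_P` different from
`PR_P` (the maximal ideal of `R_P`). -/
def IsBranched (P : Ideal R) (hP : P.IsPrime) : Prop :=
  letI := hP
  ∃ Q : Ideal (Localization.AtPrime P), Q.IsPrimary ∧
    Q ≠ IsLocalRing.maximalIdeal (Localization.AtPrime P)

/-- A prime ideal of a domain has height one. -/
def HeightOne (Q : Ideal R) : Prop :=
  Q ≠ ⊥ ∧ ∀ P : Ideal R, P.IsPrime → P < Q → P = ⊥

/-- A nonzero integral ideal `I` is `t`-invertible: `(I I⁻¹)_t = R`. -/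
def IsTInvertible (I : Ideal R) : Prop :=
  tIdeal R (Submodule.comap (Algebra.linearMap R (FractionRing R))
    (idealSub R I * ((1 : Submodule R (FractionRing R)) / idealSub R I))) = ⊤

variable {σ : Type*}

/-- An upper to zero: a prime ideal `Q` of `R[{X_α}]` with `Q ∩ R = 0`. -/
def IsUpperToZero (Q : Ideal (MvPolynomial σ R)) : Prop :=
  Q.IsPrime ∧ Ideal.comap (MvPolynomial.C : R →+* MvPolynomial σ R) Q = ⊥

/-- The content `c(f)` of a polynomial: the ideal of `R` generated by its
coefficients. -/
def mvContent (f : MvPolynomial σ R) : Ideal R :=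
  Ideal.span (Set.range fun m => MvPolynomial.coeff m f)

/-- The content `c(I)` of an ideal of `R[{X_α}]`: the ideal of `R` generated by the
coefficients of all polynomials in `I`. -/
def mvContentIdeal (Q : Ideal (MvPolynomial σ R)) : Ideal R :=
  Ideal.span {r | ∃ f ∈ Q, ∃ m, MvPolynomial.coeff m f = r}

/-- `R({X_α})`: the localization of `R[{X_α}]` at the (multiplicatively closed) set of
polynomials of unit content. -/
def mvNagata (σ : Type*) : Type _ :=
  Localization (Submonoid.closure {f : MvPolynomial σ R | mvContent R f = ⊤})

instance (σ : Type*) : CommRing (mvNagata R σ) := by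
  unfold mvNagata; infer_instance

/-- `R⟨{X_α}⟩`: the localization of `R[{X_α}]` at the (multiplicatively closed) set
`S = {f : c(f)_v = R}`. -/
def mvKronecker (σ : Type*) : Type _ :=
  Localization (Submonoid.closure {f : MvPolynomial σ R | vIdeal R (mvContent R f) = ⊤})

instance (σ : Type*) : CommRing (mvKronecker R σ) := by
  unfold mvKronecker; infer_instance


section Helpers

variable {R : Type*} [CommRing R]

local notation "K" => FractionRing R
local notation "ι" => algebraMap R (FractionRing R)

/-! ### The `v`- and `t`-closures -/

lemma mem_vIdeal {I : Ideal R} {x : R} :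
    x ∈ vIdeal R I ↔ ∀ w : K, (∀ a ∈ I, w * ι a ∈ imageR R) → w * ι x ∈ imageR R := by
  simp only [vIdeal, idealSub, Submodule.mem_comap, Algebra.linearMap_apply,
    Submodule.mem_div_iff_forall_mul_mem, Submodule.mem_one, imageR, Set.mem_range,
    Submodule.mem_map, forall_exists_index, and_imp, forall_apply_eq_imp_iff₂, mul_comm (ι x)]

lemma le_vIdeal (I : Ideal R) : I ≤ vIdeal R I :=
  fun _ hx => mem_vIdeal.2 fun _ hw => hw _ hx

lemma vIdeal_mono {I J : Ideal R} (h : I ≤ J) : vIdeal R I ≤ vIdeal R J :=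
  fun _ hx => mem_vIdeal.2 fun w hw => mem_vIdeal.1 hx w fun a ha => hw a (h ha)

lemma vIdeal_vIdeal (I : Ideal R) : vIdeal R (vIdeal R I) = vIdeal R I :=
  le_antisymm (fun _ hx => mem_vIdeal.2 fun w hw =>
    mem_vIdeal.1 hx w fun _ ha => mem_vIdeal.1 ha w hw) (le_vIdeal _)

/-- A finitely generated ideal lying elementwise in the values `S J` of a monotone operator at
finitely generated subideals `J` of `I` lies in a single such value. -/
lemma exists_fg_le_of_forall_mem {S : Ideal R → Ideal R} (hS : Monotone S) {I C : Ideal R}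
    (hC : C.FG) (h : ∀ x ∈ C, ∃ J : Ideal R, J.FG ∧ J ≤ I ∧ x ∈ S J) :
    ∃ J : Ideal R, J.FG ∧ J ≤ I ∧ C ≤ S J := by
  obtain ⟨s, rfl⟩ := hC
  choose! f hf using h
  refine ⟨s.sup f, ?_, ?_, ?_⟩
  · exact Submodule.fg_finset_sup s f fun x hx => (hf x (Submodule.subset_span hx)).1
  · exact Finset.sup_le fun x hx => (hf x (Submodule.subset_span hx)).2.1
  · exact Submodule.span_le.2 fun x hx =>
      hS (Finset.le_sup (f := f) hx) (hf x (Submodule.subset_span hx)).2.2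

lemma exists_fg_ne_bot_le {I : Ideal R} (hI : I ≠ ⊥) : ∃ J : Ideal R, J.FG ∧ J ≠ ⊥ ∧ J ≤ I := by
  obtain ⟨x, hx, hx0⟩ := Submodule.exists_mem_ne_zero_of_ne_bot hI
  exact ⟨Ideal.span {x}, Submodule.fg_span_singleton x, by simpa using hx0, by simpa using hx⟩

lemma vIdeal_le_tIdeal {I J : Ideal R} (hJ : J.FG) (h0 : J ≠ ⊥) (h : J ≤ I) :
    vIdeal R J ≤ tIdeal R I := by
  unfold tIdeal
  exact le_iSup_of_le J <| le_iSup_of_le hJ <| le_iSup_of_le h0 <| le_iSup_of_le h le_rfl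

/-- The defining union of `I_t` is directed, so every element of `I_t` lies in some `J_v`. -/
lemma mem_tIdeal {I : Ideal R} (hI : I ≠ ⊥) {x : R} :
    x ∈ tIdeal R I ↔ ∃ J : Ideal R, J.FG ∧ J ≠ ⊥ ∧ J ≤ I ∧ x ∈ vIdeal R J := by
  refine ⟨fun hx => ?_, fun ⟨J, hJ, h0, h, hx⟩ => vIdeal_le_tIdeal hJ h0 h hx⟩
  obtain ⟨J₀, hJ₀, hJ₀0, hJ₀I⟩ := exists_fg_ne_bot_le hI
  let T : Ideal R :=
    { carrier := {x | ∃ J : Ideal R, J.FG ∧ J ≠ ⊥ ∧ J ≤ I ∧ x ∈ vIdeal R J}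
      zero_mem' := ⟨J₀, hJ₀, hJ₀0, hJ₀I, zero_mem _⟩
      add_mem' := by
        rintro x y ⟨J, hJ, h0, h, hx⟩ ⟨J', hJ', h0', h', hy⟩
        refine ⟨J ⊔ J', Submodule.FG.sup hJ hJ', fun hb => h0 (le_bot_iff.1 (hb ▸ le_sup_left)),
          sup_le h h', add_mem (vIdeal_mono le_sup_left hx) (vIdeal_mono le_sup_right hy)⟩
      smul_mem' := by
        rintro c x ⟨J, hJ, h0, h, hx⟩
        exact ⟨J, hJ, h0, h, Ideal.mul_mem_left _ c hx⟩ }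
  have : tIdeal R I ≤ T := by
    unfold tIdeal
    refine iSup_le fun J => iSup_le fun hJ => iSup_le fun h0 => iSup_le fun h => ?_
    exact fun y hy => ⟨J, hJ, h0, h, hy⟩
  exact this hx

lemma le_tIdeal {I : Ideal R} (hI : I ≠ ⊥) : I ≤ tIdeal R I := by
  intro x hx
  obtain ⟨J₀, hJ₀, hJ₀0, hJ₀I⟩ := exists_fg_ne_bot_le hI
  refine (mem_tIdeal hI).2 ⟨J₀ ⊔ Ideal.span {x}, Submodule.FG.sup hJ₀ (Submodule.fg_span_singleton x),
    fun hb => hJ₀0 (le_bot_iff.1 (hb ▸ le_sup_left)), sup_le hJ₀I (by simpa using hx), ?_⟩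
  exact le_vIdeal _ (Ideal.mem_sup_right (Ideal.mem_span_singleton_self x))

lemma isTIdeal_iff {I : Ideal R} :
    IsTIdeal R I ↔ I ≠ ⊥ ∧ ∀ J : Ideal R, J.FG → J ≠ ⊥ → J ≤ I → vIdeal R J ≤ I := by
  refine and_congr_right fun hI => ⟨fun h J hJ h0 hJI => h ▸ vIdeal_le_tIdeal hJ h0 hJI,
    fun h => le_antisymm (fun x hx => ?_) (le_tIdeal hI)⟩
  obtain ⟨J, hJ, h0, hJI, hx⟩ := (mem_tIdeal hI).1 hx
  exact h J hJ h0 hJI hx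

lemma isTIdeal_tIdeal {I : Ideal R} (hI : I ≠ ⊥) : IsTIdeal R (tIdeal R I) := by
  refine isTIdeal_iff.2 ⟨fun h => hI (le_bot_iff.1 (h ▸ le_tIdeal hI)), fun C hC _ hCI => ?_⟩
  obtain ⟨J, hJ, hJI, hCJ⟩ := exists_fg_le_of_forall_mem (S := vIdeal R)
    (fun _ _ => vIdeal_mono) (I := I) hC fun x hx => by
      obtain ⟨J, hJ, -, hJI, hx⟩ := (mem_tIdeal hI).1 (hCI hx)
      exact ⟨J, hJ, hJI, hx⟩
  -- `J` may be zero, so it is enlarged by a nonzero finitely generated subideal of `I`.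
  obtain ⟨J₀, hJ₀, hJ₀0, hJ₀I⟩ := exists_fg_ne_bot_le hI
  calc vIdeal R C ≤ vIdeal R (vIdeal R (J ⊔ J₀)) :=
        vIdeal_mono (hCJ.trans (vIdeal_mono le_sup_left))
    _ = vIdeal R (J ⊔ J₀) := vIdeal_vIdeal _
    _ ≤ tIdeal R I := vIdeal_le_tIdeal (Submodule.FG.sup hJ hJ₀)
        (fun hb => hJ₀0 (le_bot_iff.1 (hb ▸ le_sup_right))) (sup_le hJI hJ₀I)

/-- The union of a chain of `t`-ideals is a `t`-ideal, so Zorn's lemma applies. -/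
lemma exists_tMax_ge {I : Ideal R} (hI : IsTIdeal R I) (htop : I ≠ ⊤) : ∃ M ∈ tMax R, I ≤ M := by
  obtain ⟨M, hIM, hM⟩ := zorn_le_nonempty₀ {J : Ideal R | IsTIdeal R J ∧ J ≠ ⊤} (by
    intro c hc hchain J₀ hJ₀
    have hdir : DirectedOn (· ≤ ·) c := hchain.directedOn
    have hne : c.Nonempty := ⟨J₀, hJ₀⟩
    refine ⟨sSup c, ⟨isTIdeal_iff.2 ⟨fun h => (hc hJ₀).1.1 (le_bot_iff.1 (h ▸ le_sSup hJ₀)),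
      fun C hC h0 hCs => ?_⟩, fun h => ?_⟩, fun J hJ => le_sSup hJ⟩
    · obtain ⟨J, hJ, hCJ⟩ := (CompleteLattice.isCompactElement_iff_le_of_directed_sSup_le _ _).1
        ((Submodule.fg_iff_compact C).1 hC) c hne hdir hCs
      exact ((isTIdeal_iff.1 (hc hJ).1).2 C hC h0 hCJ).trans (le_sSup hJ)
    · obtain ⟨J, hJ, h1⟩ := (Submodule.mem_sSup_of_directed hne hdir).1
        ((Ideal.eq_top_iff_one _).1 h)
      exact (hc hJ).2 ((Ideal.eq_top_iff_one _).2 h1)) I ⟨hI, htop⟩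
  exact ⟨M, ⟨hM.prop.1, hM.prop.2, fun J hJ hJt hMJ => le_antisymm (hM.2 ⟨hJ, hJt⟩ hMJ) hMJ⟩, hIM⟩

/-! ### Localizations and conductors -/

lemma locSet_anti {P Q : Ideal R} (h : P ≤ Q) : locSet R Q ⊆ locSet R P :=
  fun _ ⟨r, s, hs, e⟩ => ⟨r, s, fun hsP => hs (h hsP), e⟩

lemma imageR_subset_locSet {P : Ideal R} (hP : P ≠ ⊤) : imageR R ⊆ locSet R P := by
  rintro _ ⟨r, rfl⟩
  exact ⟨r, 1, (Ideal.ne_top_iff_one P).1 hP, by simp⟩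

lemma mem_colonIdeal {u : K} {x : R} : x ∈ colonIdeal R u ↔ u * ι x ∈ imageR R := by
  simp [colonIdeal, imageR, Submodule.mem_one]

lemma mem_locSet_iff {P : Ideal R} {u : K} : u ∈ locSet R P ↔ ¬ colonIdeal R u ≤ P := by
  simp only [locSet, Set.mem_ofPred_eq, SetLike.not_le_iff_exists, mem_colonIdeal, imageR,
    Set.mem_range]
  constructor
  · rintro ⟨r, s, hs, e⟩
    exact ⟨s, ⟨r, e.symm⟩, hs⟩
  · rintro ⟨s, ⟨r, e⟩, hs⟩
    exact ⟨r, s, hs, e.symm⟩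

lemma mem_imageR_iff_colon_eq_top {u : K} : u ∈ imageR R ↔ colonIdeal R u = ⊤ := by
  rw [Ideal.eq_top_iff_one, mem_colonIdeal]; simp

/-! ### Finitely generated ideals and representations of `R` -/

lemma IncompTPrimes.mono {Λ Λ' : Set (Ideal R)} (h : IncompTPrimes R Λ) (hs : Λ' ⊆ Λ) :
    IncompTPrimes R Λ' :=
  ⟨fun P hP => h.1 P (hs hP), fun P hP Q hQ => h.2 P (hs hP) Q (hs hQ)⟩

/-- A nonzero finitely generated ideal inside a proper `t`-ideal has inverse different from `R`;
an element of the inverse outside `R` contradicts a representation `R = ⋂ R_P` if no `P` contains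
the ideal. -/
lemma exists_le_of_rep {Λ : Set (Ideal R)} (he : imageR R = ⋂ P ∈ Λ, locSet R P)
    {M J : Ideal R} (hM : IsTIdeal R M) (hMt : M ≠ ⊤) (hJ : J.FG) (h0 : J ≠ ⊥) (hJM : J ≤ M) :
    ∃ P ∈ Λ, J ≤ P := by
  by_contra! hc
  have hv : vIdeal R J ≤ M := (isTIdeal_iff.1 hM).2 J hJ h0 hJM
  refine hMt ((Ideal.eq_top_iff_one M).2 (hv (mem_vIdeal.2 fun w hw => ?_)))
  rw [map_one, mul_one, he]
  refine Set.mem_iInter₂.2 fun P hP => mem_locSet_iff.2 fun hle => hc P hP ?_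
  exact fun a ha => hle (mem_colonIdeal.2 (hw a ha))

/-! ### Mori domains -/

/-- In a Mori domain every `t`-ideal is `J_v` for a nonzero finitely generated subideal `J`, by
maximality of `J_v` among such divisorial ideals. -/
lemma IsMori.exists_fg_vIdeal (h : IsMori R) {M : Ideal R} (hM : IsTIdeal R M) :
    ∃ J : Ideal R, J.FG ∧ J ≠ ⊥ ∧ J ≤ M ∧ vIdeal R J = M := by
  by_contra! hc
  have step : ∀ J : {J : Ideal R // J.FG ∧ J ≠ ⊥ ∧ J ≤ M},
      ∃ J' : {J : Ideal R // J.FG ∧ J ≠ ⊥ ∧ J ≤ M}, vIdeal R J.1 < vIdeal R J'.1 := by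
    rintro ⟨J, hJ, h0, hJM⟩
    have hlt : vIdeal R J < M :=
      lt_of_le_of_ne ((isTIdeal_iff.1 hM).2 J hJ h0 hJM) (hc J hJ h0 hJM)
    obtain ⟨x, hxM, hx⟩ := SetLike.exists_of_lt hlt
    refine ⟨⟨J ⊔ Ideal.span {x}, Submodule.FG.sup hJ (Submodule.fg_span_singleton x),
      fun hb => h0 (le_bot_iff.1 (hb ▸ le_sup_left)), sup_le hJM (by simpa using hxM)⟩,
      SetLike.lt_iff_le_and_exists.2 ⟨vIdeal_mono le_sup_left, x, ?_, hx⟩⟩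
    exact le_vIdeal _ (Ideal.mem_sup_right (Ideal.mem_span_singleton_self x))
  choose next hnext using step
  obtain ⟨J₀, hJ₀, hJ₀0, hJ₀M⟩ := exists_fg_ne_bot_le hM.1
  let f : ℕ → {J : Ideal R // J.FG ∧ J ≠ ⊥ ∧ J ≤ M} :=
    fun n => Nat.rec ⟨J₀, hJ₀, hJ₀0, hJ₀M⟩ (fun _ J => next J) n
  have hf : ∀ n, vIdeal R (f n).1 < vIdeal R (f (n + 1)).1 := fun n => hnext (f n)
  obtain ⟨n, hn⟩ := h (fun n => vIdeal R (f n).1)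
    (fun n => ⟨fun hb => (f n).2.2.1 (le_bot_iff.1 ((le_vIdeal _).trans hb.le)), vIdeal_vIdeal _⟩)
    (fun n => (hf n).le)
  exact (hf n).ne' (hn (n + 1) n.le_succ)

lemma IsMori.tMax_subset (h : IsMori R) {Λ : Set (Ideal R)} (hΛ : IncompTPrimes R Λ)
    (he : imageR R = ⋂ P ∈ Λ, locSet R P) : tMax R ⊆ Λ := by
  intro M hM
  obtain ⟨J, hJ, h0, hJM, hv⟩ := h.exists_fg_vIdeal hM.1
  obtain ⟨P, hP, hJP⟩ := exists_le_of_rep he hM.1 hM.2.1 hJ h0 hJM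
  have hMP : M ≤ P := hv ▸ (isTIdeal_iff.1 (hΛ.1 P hP).2).2 J hJ h0 hJP
  rwa [← hM.2.2 P (hΛ.1 P hP).2 (hΛ.1 P hP).1.ne_top hMP]

/-! ### The ideal `J + uJ` -/

/-- The trace on `R` of `J + uJ`, that is, the ideal of all `x ∈ R` of the form `i + uj` with
`i, j ∈ J`. -/
def addMulIdeal (u : FractionRing R) (J : Ideal R) : Ideal R where
  carrier := {x | ∃ i ∈ J, ∃ j ∈ J, ι x = ι i + u * ι j}
  zero_mem' := ⟨0, zero_mem _, 0, zero_mem _, by simp⟩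
  add_mem' := by
    rintro x y ⟨i, hi, j, hj, e⟩ ⟨i', hi', j', hj', e'⟩
    refine ⟨i + i', add_mem hi hi', j + j', add_mem hj hj', ?_⟩
    rw [map_add, map_add, map_add, e, e']; ring
  smul_mem' := by
    rintro c x ⟨i, hi, j, hj, e⟩
    refine ⟨c * i, Ideal.mul_mem_left _ _ hi, c * j, Ideal.mul_mem_left _ _ hj, ?_⟩
    rw [smul_eq_mul, map_mul, map_mul, map_mul, e]; ring

lemma addMulIdeal_mono (u : K) : Monotone (addMulIdeal (R := R) u) := by
  rintro J J' h x ⟨i, hi, j, hj, e⟩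
  exact ⟨i, h hi, j, h hj, e⟩

variable [IsDomain R]

/-! ### The representation by maximal `t`-ideals -/

/-- Maximal `t`-ideals are prime: for `a ∉ M` the quotient `(M : a)` is a proper `t`-ideal
containing `M`, hence equal to `M`. -/
lemma isPrime_of_mem_tMax {M : Ideal R} (hM : M ∈ tMax R) : M.IsPrime := by
  obtain ⟨hMt, htop, hmax⟩ := hM
  refine ⟨htop, fun {a b} hab => or_iff_not_imp_left.2 fun ha => ?_⟩
  have ha0 : a ≠ 0 := fun h => ha (h ▸ zero_mem M)
  let Q : Ideal R := Submodule.comap (LinearMap.mulLeft R a) M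
  have hQ : ∀ x, x ∈ Q ↔ a * x ∈ M := fun x => Iff.rfl
  have hMQ : M ≤ Q := fun x hx => Ideal.mul_mem_left _ _ hx
  have hQt : IsTIdeal R Q := by
    refine isTIdeal_iff.2 ⟨fun h => hMt.1 (le_bot_iff.1 (h ▸ hMQ)), fun J hJ h0 hJQ x hx => ?_⟩
    have hle : Submodule.map (LinearMap.mulLeft R a) J ≤ M := Submodule.map_le_iff_le_comap.2 hJQ
    refine (isTIdeal_iff.1 hMt).2 (Submodule.map (LinearMap.mulLeft R a) J) (Submodule.FG.map _ hJ)
      (fun hb => h0 ?_) hle (mem_vIdeal.2 fun w hw => ?_)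
    · refine (Submodule.eq_bot_iff _).2 fun y hy => ?_
      have : a * y ∈ Submodule.map (LinearMap.mulLeft R a) J := Submodule.mem_map_of_mem hy
      rw [hb] at this
      exact (mul_eq_zero.1 ((Submodule.mem_bot R).1 this)).resolve_left ha0
    · have := mem_vIdeal.1 hx (w * ι a) fun y hy => by
        have := hw (a * y) (Submodule.mem_map_of_mem (f := LinearMap.mulLeft R a) hy)
        rwa [map_mul, ← mul_assoc] at this
      rwa [mul_assoc, ← map_mul] at this
  have hQtop : Q ≠ ⊤ := fun h => ha (by
    simpa using (hQ 1).1 ((Ideal.eq_top_iff_one _).1 h))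
  rw [← hmax Q hQt hQtop hMQ]
  exact hab

lemma colonIdeal_ne_bot (u : K) : colonIdeal R u ≠ ⊥ := by
  obtain ⟨⟨a, b⟩, h⟩ := IsLocalization.surj (nonZeroDivisors R) u
  intro hb
  have : (b : R) ∈ colonIdeal R u := mem_colonIdeal.2 ⟨a, h.symm⟩
  rw [hb] at this
  exact nonZeroDivisors.coe_ne_zero b ((Submodule.mem_bot R).1 this)

lemma isTIdeal_colonIdeal (u : K) : IsTIdeal R (colonIdeal R u) :=
  isTIdeal_iff.2 ⟨colonIdeal_ne_bot u, fun _ _ _ hJ _ hx => mem_colonIdeal.2 <|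
    mem_vIdeal.1 hx u fun _ ha => mem_colonIdeal.1 (hJ ha)⟩

lemma mem_imageR_of_forall_tMax {u : K} (h : ∀ M ∈ tMax R, u ∈ locSet R M) : u ∈ imageR R := by
  by_contra hu
  obtain ⟨M, hM, hle⟩ := exists_tMax_ge (isTIdeal_colonIdeal u)
    (fun ht => hu (mem_imageR_iff_colon_eq_top.2 ht))
  exact mem_locSet_iff.1 (h M hM) hle

lemma imageR_eq_iInter_tMax : imageR R = ⋂ M ∈ tMax R, locSet R M :=
  Set.Subset.antisymm (Set.subset_iInter₂ fun _ hM => imageR_subset_locSet hM.2.1)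
    fun _ hu => mem_imageR_of_forall_tMax (Set.mem_iInter₂.1 hu)

lemma incompTPrimes_tMax : IncompTPrimes R (tMax R) :=
  ⟨fun _ hM => ⟨isPrime_of_mem_tMax hM, hM.1⟩,
    fun _ hP _ hQ h => (hP.2.2 _ hQ.1 hQ.2.1 h).symm⟩

/-- If `⋂_{N ∈ 𝔐₁} R_N = ⋂_{N ∈ 𝔐₂} R_N` and `M ∈ 𝔐₁ \ 𝔐₂`, then `M` is redundant in the
representation of `R` by its maximal `t`-ideals, so omitting it gives a second one. -/
lemma isTSharp_of_unique
    (h : ∃! Λ : Set (Ideal R), IncompTPrimes R Λ ∧ imageR R = ⋂ P ∈ Λ, locSet R P) :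
    IsTSharp R := by
  have key : ∀ 𝔐₁ 𝔐₂ : Set (Ideal R), 𝔐₁ ⊆ tMax R → 𝔐₂ ⊆ tMax R →
      (⋂ M ∈ 𝔐₁, locSet R M) = (⋂ M ∈ 𝔐₂, locSet R M) → 𝔐₁ ⊆ 𝔐₂ := by
    intro 𝔐₁ 𝔐₂ h₁ h₂ he M hM
    by_contra hM2
    have hrep : imageR R = ⋂ P ∈ tMax R \ {M}, locSet R P := by
      refine Set.Subset.antisymm
        (Set.subset_iInter₂ fun _ hP => imageR_subset_locSet hP.1.2.1) fun u hu => ?_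
      rw [Set.mem_iInter₂] at hu
      refine mem_imageR_of_forall_tMax fun N hN => ?_
      by_cases hNM : N = M
      · subst hNM
        have : u ∈ ⋂ M ∈ 𝔐₂, locSet R M := Set.mem_iInter₂.2 fun P hP =>
          hu P ⟨h₂ hP, fun e => hM2 (e ▸ hP)⟩
        rw [← he] at this
        exact Set.mem_iInter₂.1 this N hM
      · exact hu N ⟨hN, hNM⟩
    have e := h.unique ⟨incompTPrimes_tMax, imageR_eq_iInter_tMax⟩
      ⟨incompTPrimes_tMax.mono Set.sdiff_subset, hrep⟩
    have hMt := h₁ hM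
    rw [e] at hMt
    exact hMt.2 rfl
  exact fun 𝔐₁ 𝔐₂ h₁ h₂ hne he =>
    hne (Set.Subset.antisymm (key 𝔐₁ 𝔐₂ h₁ h₂ he) (key 𝔐₂ 𝔐₁ h₂ h₁ he.symm))

/-- Since every `t`-prime lies in a maximal `t`-ideal, a set of incomparable `t`-primes that
contains `t-Max(R)` equals it; hence uniqueness only needs every representing set to contain
`t-Max(R)`. -/
lemma unique_of_tMax_subset
    (h : ∀ Λ : Set (Ideal R), IncompTPrimes R Λ → imageR R = ⋂ P ∈ Λ, locSet R P →
      tMax R ⊆ Λ) :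
    ∃! Λ : Set (Ideal R), IncompTPrimes R Λ ∧ imageR R = ⋂ P ∈ Λ, locSet R P := by
  refine ⟨tMax R, ⟨incompTPrimes_tMax, imageR_eq_iInter_tMax⟩, fun Λ ⟨hΛ, he⟩ => ?_⟩
  have hsub := h Λ hΛ he
  refine Set.Subset.antisymm (fun P hP => ?_) hsub
  obtain ⟨M, hM, hPM⟩ := exists_tMax_ge (hΛ.1 P hP).2 (hΛ.1 P hP).1.ne_top
  rw [hΛ.2 P hP M (hsub hM) hPM]
  exact hM

/-! ### Prüfer `v`-multiplication domains -/

/-- In a PVMD the conductor `I = (R :_R u)` satisfies `(I + uI)_t = R`: its localization at a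
maximal `t`-ideal `N` is trivial because `u` or `u⁻¹` lies in `R_N`. A finitely generated
`J ⊆ I` with `J + uJ` in no maximal `t`-ideal already detects whether `u ∈ R_N`. -/
lemma IsPVMD.exists_fg_le_colonIdeal (h : IsPVMD R) {u : K} (hu : u ≠ 0) :
    ∃ J : Ideal R, J.FG ∧ J ≠ ⊥ ∧ J ≤ colonIdeal R u ∧
      ∀ N ∈ tMax R, u ∈ locSet R N → ¬ J ≤ N := by
  set I := colonIdeal R u with hI
  have hIB : I ≤ addMulIdeal u I := fun x hx => ⟨x, hx, 0, zero_mem _, by simp⟩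
  have hB0 : addMulIdeal u I ≠ ⊥ := fun hb => colonIdeal_ne_bot u (le_bot_iff.1 (hb ▸ hIB))
  have hBN : ∀ N ∈ tMax R, ¬ addMulIdeal u I ≤ N := by
    intro N hN hle
    rcases h N hN u hu with huN | ⟨r, s, hs, e⟩
    · exact mem_locSet_iff.1 huN (hIB.trans hle)
    · have e' : u * ι r = ι s := by rw [← e, mul_inv_cancel_left₀ hu]
      exact hs (hle ⟨0, zero_mem _, r, mem_colonIdeal.2 ⟨s, e'.symm⟩, by simp [e']⟩)
  have hBt : tIdeal R (addMulIdeal u I) = ⊤ := by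
    by_contra ht
    obtain ⟨N, hN, hle⟩ := exists_tMax_ge (isTIdeal_tIdeal hB0) ht
    exact hBN N hN ((le_tIdeal hB0).trans hle)
  obtain ⟨C, hC, hC0, hCB, h1⟩ := (mem_tIdeal hB0).1 ((Ideal.eq_top_iff_one _).1 hBt)
  obtain ⟨J, hJ, hJI, hCJ⟩ := exists_fg_le_of_forall_mem (addMulIdeal_mono u) (I := I) hC
    fun x hx => by
      obtain ⟨i, hi, j, hj, e⟩ := hCB hx
      refine ⟨Ideal.span {i} ⊔ Ideal.span {j},
        (Submodule.fg_span_singleton i).sup (Submodule.fg_span_singleton j),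
        sup_le (by simpa using hi) (by simpa using hj), i, ?_, j, ?_, e⟩
      · exact Ideal.mem_sup_left (Ideal.mem_span_singleton_self i)
      · exact Ideal.mem_sup_right (Ideal.mem_span_singleton_self j)
  have hinj := IsFractionRing.injective R K
  refine ⟨J, hJ, ?_, hJI, ?_⟩
  · rintro rfl
    refine hC0 ((Submodule.eq_bot_iff _).2 fun x hx => ?_)
    obtain ⟨i, hi, j, hj, e⟩ := hCJ hx
    rw [(Submodule.mem_bot R).1 hi, (Submodule.mem_bot R).1 hj] at e
    exact hinj (by simpa using e)
  · rintro N hN ⟨r, s, hs, e⟩ hJN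
    have hNp := isPrime_of_mem_tMax hN
    -- If `J ⊆ N` and `su ∈ R` with `s ∉ N`, then `s(J + uJ) ⊆ N`, so `C ⊆ N` and `1 ∈ C_v ⊆ N`.
    have hCN : C ≤ N := by
      intro x hx
      obtain ⟨i, hi, j, hj, e'⟩ := hCJ hx
      have : s * x = s * i + r * j := hinj (by
        rw [map_mul, map_add, map_mul, map_mul, e', ← e]; ring)
      have hmem : s * x ∈ N := this ▸
        add_mem (Ideal.mul_mem_left _ _ (hJN hi)) (Ideal.mul_mem_left _ _ (hJN hj))
      exact (hNp.mem_or_mem hmem).resolve_left hs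
    exact hN.2.1 ((Ideal.eq_top_iff_one _).2 ((isTIdeal_iff.1 hN.1).2 C hC hC0 hCN h1))

/-- In a PVMD the primes below a maximal `t`-ideal `M` form a chain, as `R_M` is a valuation
domain. -/
lemma IsPVMD.le_total_of_le (h : IsPVMD R) {M P Q : Ideal R} (hM : M ∈ tMax R)
    (hP : P.IsPrime) (hQ : Q.IsPrime) (hPM : P ≤ M) (hQM : Q ≤ M) : P ≤ Q ∨ Q ≤ P := by
  by_contra! hc
  obtain ⟨p, hpP, hpQ⟩ := SetLike.not_le_iff_exists.1 hc.1
  obtain ⟨q, hqQ, hqP⟩ := SetLike.not_le_iff_exists.1 hc.2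
  have hinj := IsFractionRing.injective R K
  have hp0 : ι p ≠ 0 := fun e => hpQ ((map_eq_zero_iff _ hinj).1 e ▸ zero_mem Q)
  have hq0 : ι q ≠ 0 := fun e => hqP ((map_eq_zero_iff _ hinj).1 e ▸ zero_mem P)
  rcases h M hM (ι p / ι q) (div_ne_zero hp0 hq0) with ⟨r, s, hs, e⟩ | ⟨r, s, hs, e⟩
  · have e' : p * s = r * q := hinj (by
      rw [map_mul, map_mul, ← e]; field_simp)
    exact (hQ.mem_or_mem (e' ▸ Ideal.mul_mem_left _ _ hqQ)).elim hpQ fun hsQ => hs (hQM hsQ)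
  · have e' : q * s = r * p := hinj (by
      rw [map_mul, map_mul, ← e]; field_simp)
    exact (hP.mem_or_mem (e' ▸ Ideal.mul_mem_left _ _ hpP)).elim hqP fun hsP => hs (hPM hsP)

lemma IsPVMD.tMax_subset (h : IsPVMD R) (hs : IsTSharp R) {Λ : Set (Ideal R)}
    (hΛ : IncompTPrimes R Λ) (he : imageR R = ⋂ P ∈ Λ, locSet R P) : tMax R ⊆ Λ := by
  intro M hM
  by_contra hMΛ
  obtain ⟨u, huN, huM⟩ : ∃ u : K, (∀ N ∈ tMax R, N ≠ M → u ∈ locSet R N) ∧ u ∉ locSet R M := by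
    by_contra! hc
    refine hs (tMax R) (tMax R \ {M}) le_rfl Set.sdiff_subset
      (fun e => (e ▸ hM : M ∈ tMax R \ {M}).2 rfl) (Set.Subset.antisymm
        (Set.biInter_subset_biInter_left Set.sdiff_subset) fun u hu => ?_)
    rw [Set.mem_iInter₂] at hu
    refine Set.mem_iInter₂.2 fun N hN => ?_
    have hu' : ∀ N ∈ tMax R, N ≠ M → u ∈ locSet R N := fun N hN hne => hu N ⟨hN, hne⟩
    by_cases hNM : N = M
    · exact hNM ▸ hc u hu'
    · exact hu' N hN hNM
  have hu0 : u ≠ 0 := by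
    rintro rfl
    exact huM (imageR_subset_locSet hM.2.1 ⟨0, map_zero _⟩)
  obtain ⟨J, hJ, h0, hJI, hJN⟩ := h.exists_fg_le_colonIdeal hu0
  have hJM : J ≤ M := hJI.trans (not_not.1 fun hc => huM (mem_locSet_iff.2 hc))
  -- At most one member of `Λ` lies below `M`, and an element of `M` outside it exists.
  obtain ⟨r, hrM, hr⟩ : ∃ r ∈ M, ∀ P ∈ Λ, P ≤ M → r ∉ P := by
    by_cases hP : ∃ P ∈ Λ, P ≤ M
    · obtain ⟨P, hP, hPM⟩ := hP
      obtain ⟨r, hrM, hrP⟩ := SetLike.exists_of_lt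
        (lt_of_le_of_ne hPM fun e => hMΛ (e ▸ hP))
      refine ⟨r, hrM, fun Q hQ hQM => ?_⟩
      have : P = Q := (h.le_total_of_le hM (hΛ.1 P hP).1 (hΛ.1 Q hQ).1 hPM hQM).elim
        (hΛ.2 P hP Q hQ) fun hle => (hΛ.2 Q hQ P hP hle).symm
      exact this ▸ hrP
    · exact ⟨0, zero_mem _, fun P hPΛ hPM => (hP ⟨P, hPΛ, hPM⟩).elim⟩
  obtain ⟨P, hP, hle⟩ := exists_le_of_rep he hM.1 hM.2.1
    (Submodule.FG.sup hJ (Submodule.fg_span_singleton r)) (fun hb => h0 (le_bot_iff.1 (hb ▸ le_sup_left)))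
    (sup_le hJM (by simpa using hrM) : J ⊔ Ideal.span {r} ≤ M)
  by_cases hPM : P ≤ M
  · exact hr P hP hPM (hle (Ideal.mem_sup_right (Ideal.mem_span_singleton_self r)))
  · obtain ⟨N, hN, hPN⟩ := exists_tMax_ge (hΛ.1 P hP).2 (hΛ.1 P hP).1.ne_top
    exact hJN N hN (huN N hN fun e => hPM (e ▸ hPN)) ((le_sup_left.trans hle).trans hPN)

end Helpers

/-- **Theorem (1.7).**  Let `R` be either a PVMD or a Mori domain.  Then `R` is a
`t#`-domain if and only if there is a unique set `{P_α}` of pairwise incomparable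
`t`-primes of `R` such that `R = ⋂_α R_{P_α}`.  In particular, a Mori domain has this
unique-representation property. -/
theorem tsharp_iff_unique_representation (R : Type*) [CommRing R] [IsDomain R]
    (h : IsPVMD R ∨ IsMori R) :
    (IsTSharp R ↔
      ∃! Λ : Set (Ideal R), IncompTPrimes R Λ ∧ imageR R = ⋂ P ∈ Λ, locSet R P) ∧
    (IsMori R →
      ∃! Λ : Set (Ideal R), IncompTPrimes R Λ ∧ imageR R = ⋂ P ∈ Λ, locSet R P) := by
  have hMori : IsMori R →
      ∃! Λ : Set (Ideal R), IncompTPrimes R Λ ∧ imageR R = ⋂ P ∈ Λ, locSet R P :=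
    fun hm => unique_of_tMax_subset fun _ hΛ he => hm.tMax_subset hΛ he
  refine ⟨⟨fun hs => ?_, isTSharp_of_unique⟩, hMori⟩
  rcases h with hp | hm
  · exact unique_of_tMax_subset fun _ hΛ he => hp.tMax_subset hs hΛ he
  · exact hMori hm

end TSharpPaper
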